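/- Suppose the set X/E of E-classes is finite. If J is a two-sided ideal of reg(T) that is principal, i.e., J = {λγμ : λ, μ ∈ reg(T)} for some γ ∈ J (as functions, J = {μ ∘ γ ∘ λ : λ, μ ∈ reg(T)}), then there exists a function s assigning to each E-class A a cardinal s(A) with 1 ≤ s(A) ≤ |A| such that J = Q(r) where r(A) = s(A)⁺ (the successor cardinal) for every E-class A. -/

import Mathlib

/-!
An element of `reg(T)` is exactly a map that permutes the `E`-classes. Given `α, γ ∈ reg(T)`, the
map `α` factors as `μ ∘ γ ∘ λ` if and only if some permutation `σ` of the classes satisfies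
`|Aα| ≤ |(σ A)γ|` for all `A`: injections `Aα → (σ A)γ` tell `λ` where to send `A`, and their left
inverses, one on each class, glue to `μ`. Hence the ideal generated by `γ` is `Q(r)` with
`r(A) = |Aγ|⁺`. As `Q(r)` does not change when `r` is permuted, one may instead take
`r(A) = |(c⁻¹ A)γ|⁺`, where `γ` maps each class `B` into `c B`; then `(c⁻¹ A)γ ⊆ A`.
-/

universe u

/-- The semigroup `T_{E*}(X)` of maps preserving `E` in both directions. -/
def TEstar {X : Type u} (E : Setoid X) : Set (X → X) :=
  {α | ∀ x y : X, E.r x y ↔ E.r (α x) (α y)}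

/-- The `E`-class of `x`. -/
def cls {X : Type u} (E : Setoid X) (x : X) : Set X := {y | E.r x y}

/-- The regular part `reg(T)` of `T_{E*}(X)`: every `E`-class meets the range. -/
def regT {X : Type u} (E : Setoid X) : Set (X → X) :=
  {α | α ∈ TEstar E ∧ ∀ x : X, (cls E x ∩ Set.range α).Nonempty}

/-- The `E`-class indexed by an element of the quotient `X/E`. -/
def clsQ {X : Type u} (E : Setoid X) (A : Quotient E) : Set X :=
  {x | Quotient.mk E x = A}

/-- The ideal `Q(r)` of `reg(T)`. -/
def Qr {X : Type u} (E : Setoid X) (r : Quotient E → Cardinal.{u}) : Set (X → X) :=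
  {α | α ∈ regT E ∧ ∃ σ : Quotient E ≃ Quotient E,
    ∀ A : Quotient E, Cardinal.mk ↥(α '' clsQ E A) < r (σ A)}

section Factorization

open Cardinal Function Set

theorem mk_image_comp_comp_le {X Z : Type*} {Y W : Type u} {S : Set X} {T : Set Z} {l : X → Z}
    (hl : MapsTo l S T) (γ : Z → W) (m : W → Y) : #((m ∘ γ ∘ l) '' S) ≤ #(γ '' T) :=
  calc #((m ∘ γ ∘ l) '' S)
      = #(m '' (γ '' (l '' S))) := by rw [image_comp, image_comp]
    _ ≤ #(γ '' (l '' S)) := mk_image_le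
    _ ≤ #(γ '' T) := mk_le_mk_of_subset (image_mono hl.image_subset)

theorem exists_eqOn_comp_comp_of_mk_image_le {X Z : Type*} {Y W : Type u} {S : Set X} {T : Set Z}
    {α : X → Y} {γ : Z → W} (hS : S.Nonempty) (h : #(α '' S) ≤ #(γ '' T)) :
    ∃ (l : X → Z) (m : W → Y), MapsTo l S T ∧ (∀ w, m w ∈ α '' S) ∧ EqOn (m ∘ γ ∘ l) α S := by
  obtain ⟨i⟩ := h
  have hi : Injective fun y : α '' S => (i y : W) := Subtype.val_injective.comp i.injective
  have : Nonempty (α '' S) := (hS.image α).to_subtype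
  have hlift : ∀ x (hx : x ∈ S), ∃ z ∈ T, γ z = i ⟨α x, mem_image_of_mem α hx⟩ :=
    fun x hx => (i ⟨α x, mem_image_of_mem α hx⟩).2
  have : Nonempty Z := let ⟨x, hx⟩ := hS; ⟨(hlift x hx).choose⟩
  choose! l hlT hγl using hlift
  refine ⟨l, Subtype.val ∘ invFun fun y : α '' S => (i y : W), hlT,
    fun w => Subtype.coe_prop _, fun x hx => ?_⟩
  simp only [comp_apply, hγl x hx, leftInverse_invFun hi _]

end Factorization

section RegularPart

open Function Set

variable {X : Type u} {E : Setoid X} {α β : X → X}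

theorem clsQ_nonempty (A : Quotient E) : (clsQ E A).Nonempty :=
  Quotient.exists_rep A

theorem mapsTo_clsQ_of_semiconj {e : Quotient E → Quotient E}
    (h : Semiconj (Quotient.mk E) α e) (A : Quotient E) : MapsTo α (clsQ E A) (clsQ E (e A)) :=
  fun x hx => (h x).trans (congrArg e hx)

theorem mem_TEstar_iff_exists_semiconj :
    α ∈ TEstar E ↔
      ∃ e : Quotient E → Quotient E, Injective e ∧ Semiconj (Quotient.mk E) α e := by
  constructor
  · intro h
    refine ⟨Quotient.map α fun x y => (h x y).1, ?_, fun _ => rfl⟩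
    rintro ⟨x⟩ ⟨y⟩ hxy
    exact Quotient.sound ((h x y).2 (Quotient.exact hxy))
  · rintro ⟨e, he, h⟩ x y
    calc E.r x y
        ↔ Quotient.mk E x = Quotient.mk E y := Quotient.eq.symm
      _ ↔ e (Quotient.mk E x) = e (Quotient.mk E y) := he.eq_iff.symm
      _ ↔ Quotient.mk E (α x) = Quotient.mk E (α y) := by rw [h x, h y]
      _ ↔ E.r (α x) (α y) := Quotient.eq

theorem forall_cls_inter_range_nonempty_iff {e : Quotient E → Quotient E}
    (h : Semiconj (Quotient.mk E) α e) :
    (∀ x, (cls E x ∩ range α).Nonempty) ↔ Surjective e := by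
  constructor
  · rintro hα ⟨x⟩
    obtain ⟨_, hx, z, rfl⟩ := hα x
    exact ⟨Quotient.mk E z, (h z).symm.trans (Quotient.sound (E.symm hx))⟩
  · intro he x
    obtain ⟨⟨z⟩, hz⟩ := he (Quotient.mk E x)
    exact ⟨α z, Quotient.exact (hz.symm.trans (h z).symm), z, rfl⟩

theorem mem_regT_iff_exists_perm_semiconj :
    α ∈ regT E ↔ ∃ e : Equiv.Perm (Quotient E), Semiconj (Quotient.mk E) α e := by
  constructor
  · rintro ⟨hα, hrange⟩
    obtain ⟨e, he, h⟩ := mem_TEstar_iff_exists_semiconj.1 hα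
    exact ⟨.ofBijective e ⟨he, (forall_cls_inter_range_nonempty_iff h).1 hrange⟩, h⟩
  · rintro ⟨e, h⟩
    exact ⟨mem_TEstar_iff_exists_semiconj.2 ⟨e, e.injective, h⟩,
      (forall_cls_inter_range_nonempty_iff h).2 e.surjective⟩

theorem comp_mem_regT (hα : α ∈ regT E) (hβ : β ∈ regT E) : α ∘ β ∈ regT E := by
  obtain ⟨a, ha⟩ := mem_regT_iff_exists_perm_semiconj.1 hα
  obtain ⟨b, hb⟩ := mem_regT_iff_exists_perm_semiconj.1 hβ
  exact mem_regT_iff_exists_perm_semiconj.2 ⟨b.trans a, ha.comp_right hb⟩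

theorem Qr_comp_perm (r : Quotient E → Cardinal.{u}) (c : Equiv.Perm (Quotient E)) :
    Qr E (r ∘ c) = Qr E r := by
  ext α
  exact and_congr_right fun _ => (Equiv.mulLeft c).exists_congr fun _ => Iff.rfl

end RegularPart

section PrincipalIdeal

open Cardinal Function Set

variable {X : Type u} {E : Setoid X} {α γ : X → X}

/-- The principal two-sided ideal `{μ ∘ γ ∘ λ : λ, μ ∈ reg(T)}` of `reg(T)` generated by `γ`. -/
def principalIdeal (E : Setoid X) (γ : X → X) : Set (X → X) :=
  {f | ∃ l ∈ regT E, ∃ m ∈ regT E, f = m ∘ γ ∘ l}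

theorem principalIdeal_subset_regT (hγ : γ ∈ regT E) : principalIdeal E γ ⊆ regT E := by
  rintro _ ⟨l, hl, m, hm, rfl⟩
  exact comp_mem_regT hm (comp_mem_regT hγ hl)

theorem exists_perm_mk_image_le_of_mem_principalIdeal (h : α ∈ principalIdeal E γ) :
    ∃ σ : Equiv.Perm (Quotient E), ∀ A, #(α '' clsQ E A) ≤ #(γ '' clsQ E (σ A)) := by
  obtain ⟨l, hl, m, -, rfl⟩ := h
  obtain ⟨σ, hσ⟩ := mem_regT_iff_exists_perm_semiconj.1 hl
  exact ⟨σ, fun A => mk_image_comp_comp_le (mapsTo_clsQ_of_semiconj hσ A) γ m⟩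

theorem mem_principalIdeal_of_mk_image_le (hα : α ∈ regT E) (hγ : γ ∈ regT E)
    (σ : Equiv.Perm (Quotient E)) (hσ : ∀ A, #(α '' clsQ E A) ≤ #(γ '' clsQ E (σ A))) :
    α ∈ principalIdeal E γ := by
  obtain ⟨a, ha⟩ := mem_regT_iff_exists_perm_semiconj.1 hα
  obtain ⟨c, hc⟩ := mem_regT_iff_exists_perm_semiconj.1 hγ
  choose l m hl hm hfactor using fun A =>
    exists_eqOn_comp_comp_of_mk_image_le (clsQ_nonempty A) (hσ A)
  let source : Equiv.Perm (Quotient E) := (σ.trans c).symm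
  have hlσ : Semiconj (Quotient.mk E) (fun x => l (Quotient.mk E x) x) σ :=
    fun x => hl (Quotient.mk E x) rfl
  have hma : Semiconj (Quotient.mk E) (fun y => m (source (Quotient.mk E y)) y)
      (source.trans a) :=
    fun y => (mapsTo_clsQ_of_semiconj ha _).image_subset (hm (source (Quotient.mk E y)) y)
  refine ⟨_, mem_regT_iff_exists_perm_semiconj.2 ⟨σ, hlσ⟩,
    _, mem_regT_iff_exists_perm_semiconj.2 ⟨_, hma⟩, funext fun x => ?_⟩
  have hsource : source (Quotient.mk E (γ (l (Quotient.mk E x) x))) = Quotient.mk E x := by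
    rw [hc, hlσ x]
    exact (σ.trans c).symm_apply_apply _
  simp only [comp_apply, hsource]
  exact (hfactor (Quotient.mk E x) rfl).symm

theorem mem_principalIdeal_iff (hγ : γ ∈ regT E) :
    α ∈ principalIdeal E γ ↔ α ∈ regT E ∧
      ∃ σ : Equiv.Perm (Quotient E), ∀ A, #(α '' clsQ E A) ≤ #(γ '' clsQ E (σ A)) :=
  ⟨fun h => ⟨principalIdeal_subset_regT hγ h, exists_perm_mk_image_le_of_mem_principalIdeal h⟩,
    fun ⟨hα, σ, hσ⟩ => mem_principalIdeal_of_mk_image_le hα hγ σ hσ⟩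

theorem principalIdeal_eq_Qr (hγ : γ ∈ regT E) :
    principalIdeal E γ = Qr E fun A => Order.succ #(γ '' clsQ E A) := by
  ext α
  simp only [mem_principalIdeal_iff hγ, Qr, mem_ofPred_eq, Order.lt_succ_iff]

theorem stmt11_general (hγ : γ ∈ regT E) :
    ∃ s : Quotient E → Cardinal.{u},
      (∀ A, 1 ≤ s A ∧ s A ≤ #(clsQ E A)) ∧
      principalIdeal E γ = Qr E fun A => Order.succ (s A) := by
  obtain ⟨c, hc⟩ := mem_regT_iff_exists_perm_semiconj.1 hγ
  refine ⟨fun A => #(γ '' clsQ E (c.symm A)), fun A => ⟨?_, ?_⟩,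
    (principalIdeal_eq_Qr hγ).trans (Qr_comp_perm _ c.symm).symm⟩
  · rw [Cardinal.one_le_iff_ne_zero, mk_ne_zero_iff]
    exact ((clsQ_nonempty _).image γ).to_subtype
  · have hmaps := mapsTo_clsQ_of_semiconj hc (c.symm A)
    rw [c.apply_symm_apply] at hmaps
    exact mk_le_mk_of_subset hmaps.image_subset

end PrincipalIdeal

/-- When `X/E` is finite, every principal ideal of `reg(T)` is of the form `Q(r)`
with `r A = s A ⁺`, `1 ≤ s A ≤ |A|`. -/
theorem stmt11 {X : Type u} [Nonempty X] (E : Setoid X) [Finite (Quotient E)]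
    (J : Set (X → X)) (hJsub : J ⊆ regT E)
    (hJideal : ∀ α ∈ J, ∀ β ∈ regT E, β ∘ α ∈ J ∧ α ∘ β ∈ J)
    (hprin : ∃ γ ∈ J, J = {f | ∃ l ∈ regT E, ∃ m ∈ regT E, f = m ∘ γ ∘ l}) :
    ∃ s : Quotient E → Cardinal.{u},
      (∀ A : Quotient E, 1 ≤ s A ∧ s A ≤ Cardinal.mk ↥(clsQ E A)) ∧
      J = Qr E (fun A => Order.succ (s A)) := by
  obtain ⟨γ, hγ, rfl⟩ := hprin
  exact stmt11_general (hJsub hγ)
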